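/- Let g ∈ ℝ[z₁,…,zₙ] be a Γ₁-stable (Hurwitz-stable) polynomial. Then for every k, the degree-k part g_k is either identically 0 or Γ_{1/2}-stable. -/

import Mathlib

open MvPolynomial

/-- A real polynomial is `Γ_α`-stable if it does not vanish when all variables are
assigned complex values in the open sector of aperture `απ` centered on the positive
real axis. -/
def SectorStable {n : ℕ} (α : ℝ) (g : MvPolynomial (Fin n) ℝ) : Prop :=
  ∀ z : Fin n → ℂ, (∀ i, z i ≠ 0 ∧ |(z i).arg| < α * Real.pi / 2) →
    MvPolynomial.aeval z g ≠ 0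

open Filter Topology in
/-- If every root is at most `K` times farther from `y` than from `x`, the values compare. -/
theorem aux_ratio (P : Polynomial ℂ) (x y : ℂ) (K : ℝ) (hK : 1 ≤ K) (d : ℕ)
    (hd : P.natDegree ≤ d) (h : ∀ a, P.eval a = 0 → ‖y - a‖ ≤ K * ‖x - a‖) :
    ‖P.eval y‖ ≤ K ^ d * ‖P.eval x‖ := by
  by_cases hP : P = 0
  · simp [hP]
  have key : ∀ s : Multiset ℂ, (∀ a ∈ s, ‖y - a‖ ≤ K * ‖x - a‖) →
      ‖(s.map (fun a => y - a)).prod‖ ≤ K ^ (Multiset.card s) * ‖(s.map (fun a => x - a)).prod‖ := by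
    intro s
    induction s using Multiset.induction with
    | empty => simp
    | cons a s ih =>
      intro hs
      have h1 := hs a (Multiset.mem_cons_self a s)
      have h2 := ih (fun b hb => hs b (Multiset.mem_cons_of_mem hb))
      simp only [Multiset.map_cons, Multiset.prod_cons, norm_mul, Multiset.card_cons, pow_succ]
      calc _ ≤ (K * ‖x - a‖) * (K ^ (Multiset.card s) * ‖(s.map (fun a => x - a)).prod‖) := by
            gcongr
        _ = _ := by ring
  have hsp : P.Splits := IsAlgClosed.splits P
  have hk := key P.roots (fun a ha => h a (by
    have := (Polynomial.mem_roots hP).1 ha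
    exact this))
  rw [hsp.eval_eq_prod_roots, hsp.eval_eq_prod_roots, norm_mul, norm_mul]
  have hc : Multiset.card P.roots ≤ d := (Polynomial.card_roots' P).trans hd
  calc _ ≤ ‖P.leadingCoeff‖ * (K ^ (Multiset.card P.roots) *
            ‖(P.roots.map (fun a => x - a)).prod‖) := by gcongr
    _ ≤ ‖P.leadingCoeff‖ * (K ^ d * ‖(P.roots.map (fun a => x - a)).prod‖) := by
        gcongr
    _ = _ := by ring

open Filter Topology in
/-- Hurwitz-type limit theorem for multivariate polynomials of bounded degree. -/
theorem aux_hurwitz {n : ℕ} (U : Set (Fin n → ℂ)) (hU : IsOpen U) (d : ℕ)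
    (H : ℕ → MvPolynomial (Fin n) ℂ) (hd : ∀ N, (H N).totalDegree ≤ d)
    (hne : ∀ N, ∀ z ∈ U, MvPolynomial.aeval z (H N) ≠ 0)
    (h : (Fin n → ℂ) → ℂ)
    (hlim : ∀ z, Tendsto (fun N => MvPolynomial.aeval z (H N)) atTop (𝓝 (h z)))
    (z : Fin n → ℂ) (hz : z ∈ U) (hz0 : h z = 0) (y : Fin n → ℂ) : h y = 0 := by
  set v : Fin n → ℂ := y - z with hv
  have hcont : Continuous (fun w : ℂ => z + w • v) := by fun_prop
  have hmem : (fun w : ℂ => z + w • v) ⁻¹' U ∈ 𝓝 (0 : ℂ) :=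
    (hU.preimage hcont).mem_nhds (by simpa using hz)
  obtain ⟨r, hr, hball⟩ := Metric.mem_nhds_iff.1 hmem
  let L : Fin n → Polynomial ℂ := fun i => Polynomial.C (v i) * Polynomial.X + Polynomial.C (z i)
  have heval : ∀ N w, (MvPolynomial.aeval L (H N)).eval w
      = MvPolynomial.aeval (z + w • v) (H N) := by
    intro N w
    have := MvPolynomial.map_aeval L (Polynomial.evalRingHom w) (H N)
    rw [← Polynomial.coe_evalRingHom, this, MvPolynomial.aeval_def, MvPolynomial.coe_eval₂Hom]
    congr 1
    · ext <;> simp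
    · ext i
      simp [L]
      ring
  have hdeg : ∀ N, (MvPolynomial.aeval L (H N)).natDegree ≤ d := by
    intro N
    have := MvPolynomial.aeval_natDegree_le (H N) (hd N) L (n := 1)
      (fun i => Polynomial.natDegree_linear_le)
    simpa using this
  have hb : ∀ N, ‖MvPolynomial.aeval y (H N)‖
      ≤ (1 + 1 / r) ^ d * ‖MvPolynomial.aeval z (H N)‖ := by
    intro N
    have := aux_ratio (MvPolynomial.aeval L (H N)) 0 1 (1 + 1 / r)
      (by have := one_div_pos.2 hr; linarith) d (hdeg N) (by
        intro a ha
        have har : r ≤ ‖a‖ := by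
          by_contra hlt
          push Not at hlt
          have : a ∈ Metric.ball (0 : ℂ) r := by simpa using hlt
          have h2 := hball this
          exact hne N _ h2 (by rw [← heval]; exact ha)
        have h1 : 1 ≤ 1 / r * ‖a‖ := by
          rw [one_div, inv_mul_eq_div, le_div_iff₀ hr]; linarith
        calc ‖1 - a‖ ≤ ‖(1 : ℂ)‖ + ‖a‖ := norm_sub_le _ _
          _ ≤ (1 + 1 / r) * ‖0 - a‖ := by simp only [norm_one, zero_sub, norm_neg]; linarith)
    rw [heval, heval] at this
    simpa [hv] using this
  have hl1 : Tendsto (fun N => (1 + 1 / r) ^ d * ‖MvPolynomial.aeval z (H N)‖) atTop (𝓝 0) := by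
    have := ((hlim z).norm).const_mul ((1 + 1 / r) ^ d)
    simpa [hz0] using this
  have hl2 : Tendsto (fun N => MvPolynomial.aeval y (H N)) atTop (𝓝 0) :=
    squeeze_zero_norm hb hl1
  exact tendsto_nhds_unique (hlim y) hl2

/-- `c + d/dX` preserves nonvanishing on the right half-plane. -/
theorem aux_deriv (c : ℝ) (hc : 0 < c) (P : Polynomial ℂ)
    (hP : ∀ w : ℂ, 0 < w.re → P.eval w ≠ 0) (w : ℂ) (hw : 0 < w.re) :
    ((c : ℂ) • P + Polynomial.derivative P).eval w ≠ 0 := by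
  have hsp : P.Splits := IsAlgClosed.splits P
  have h0 := hP w hw
  have hd := hsp.eval_derivative_div_eval_of_ne_zero h0
  have key : ∀ s : Multiset ℂ, (∀ a ∈ s, a.re ≤ 0) →
      0 ≤ ((s.map (fun a => 1 / (w - a))).sum).re := by
    intro s
    induction s using Multiset.induction with
    | empty => simp
    | cons a s ih =>
      intro hs
      have h1 := hs a (Multiset.mem_cons_self a s)
      have h2 := ih (fun b hb => hs b (Multiset.mem_cons_of_mem hb))
      simp only [Multiset.map_cons, Multiset.sum_cons, Complex.add_re]
      have : 0 ≤ (1 / (w - a)).re := by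
        rw [one_div, Complex.inv_re]
        apply div_nonneg _ (Complex.normSq_nonneg _)
        simp; linarith
      linarith
  have hk := key P.roots (fun a ha => by
    by_contra hlt
    push Not at hlt
    exact hP a hlt (Polynomial.isRoot_of_mem_roots ha))
  rw [← hd] at hk
  intro hz
  rw [Polynomial.eval_add, Polynomial.eval_smul, smul_eq_mul] at hz
  have : (Polynomial.derivative P).eval w / P.eval w = -(c : ℂ) := by
    rw [div_eq_iff h0]
    linear_combination hz
  rw [this] at hk
  simp at hk
  linarith

/-- The operator `c + d/dX`. -/
noncomputable def auxT (c : ℂ) : Polynomial ℂ →ₗ[ℂ] Polynomial ℂ :=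
  c • LinearMap.id + Polynomial.derivative

theorem auxT_apply (c : ℂ) (P : Polynomial ℂ) :
    auxT c P = c • P + Polynomial.derivative P := rfl

theorem auxT_iter (c : ℝ) (hc : 0 < c) (m : ℕ) : ∀ (P : Polynomial ℂ)
    (_ : ∀ w : ℂ, 0 < w.re → P.eval w ≠ 0) (w : ℂ) (_ : 0 < w.re),
    (((auxT c) ^ m) P).eval w ≠ 0 := by
  induction m with
  | zero => intro P hP w hw; simpa using hP w hw
  | succ m ih =>
    intro P hP w hw
    rw [pow_succ, Module.End.mul_apply]
    exact ih _ (fun w hw => by rw [auxT_apply]; exact aux_deriv c hc P hP w hw) w hw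

open Filter Topology in
theorem auxT_lim (c : ℕ → ℂ) (hc : Tendsto c atTop (𝓝 0)) (m : ℕ) : ∀ P : Polynomial ℂ,
    Tendsto (fun N => (((auxT (c N)) ^ m) P).eval (c N)) atTop
      (𝓝 ((Polynomial.derivative^[m] P).eval 0)) := by
  induction m with
  | zero =>
    intro P
    have := (P.continuous.tendsto 0).comp hc
    simpa [Function.comp_def] using this
  | succ m ih =>
    intro P
    have h1 := (hc.mul (ih P)).add (ih (Polynomial.derivative P))
    simp only [zero_mul, zero_add] at h1
    refine h1.congr (fun N => ?_)
    rw [pow_succ, Module.End.mul_apply, auxT_apply, map_add, map_smul, Polynomial.eval_add,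
      Polynomial.eval_smul, smul_eq_mul]

theorem aux_conj {n : ℕ} (g : MvPolynomial (Fin n) ℝ) (z : Fin n → ℂ) :
    MvPolynomial.aeval (fun i => (starRingEnd ℂ) (z i)) g
      = (starRingEnd ℂ) (MvPolynomial.aeval z g) := by
  rw [MvPolynomial.aeval_def, MvPolynomial.aeval_def, ← MvPolynomial.coe_eval₂Hom,
    ← MvPolynomial.coe_eval₂Hom, MvPolynomial.map_eval₂Hom]
  simp only [MvPolynomial.coe_eval₂Hom]
  congr 1
  ext x
  simp

/-- Hermite-Biehler type inequality. -/
theorem aux_HB {n : ℕ} (g : MvPolynomial (Fin n) ℝ)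
    (hg : ∀ z : Fin n → ℂ, (∀ i, 0 < (z i).re) → MvPolynomial.aeval z g ≠ 0)
    (z : Fin n → ℂ) (hz : ∀ i, 0 < (z i).re) :
    ‖MvPolynomial.aeval (-z) g‖ ≤ ‖MvPolynomial.aeval z g‖ := by
  let L : Fin n → Polynomial ℂ := fun i =>
    Polynomial.C ((z i).re : ℂ) * Polynomial.X + Polynomial.C ((z i).im * Complex.I)
  have heval : ∀ w, (MvPolynomial.aeval L g).eval w
      = MvPolynomial.aeval (fun i => (z i).re * w + (z i).im * Complex.I) g := by
    intro w
    have := MvPolynomial.map_aeval L (Polynomial.evalRingHom w) g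
    rw [← Polynomial.coe_evalRingHom, this, MvPolynomial.aeval_def, MvPolynomial.coe_eval₂Hom]
    congr 1
    · ext; simp
    · ext i
      simp [L]
  have h := aux_ratio (MvPolynomial.aeval L g) 1 (-1) 1 le_rfl _ le_rfl (by
    intro a ha
    have hre : a.re ≤ 0 := by
      by_contra hlt
      push Not at hlt
      rw [heval] at ha
      refine hg _ (fun i => ?_) ha
      simpa using mul_pos (hz i) hlt
    rw [one_mul, ← sq_le_sq₀ (norm_nonneg _) (norm_nonneg _), ← Complex.normSq_eq_norm_sq,
      ← Complex.normSq_eq_norm_sq, Complex.normSq_apply, Complex.normSq_apply]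
    simp
    nlinarith)
  rw [heval, heval, one_pow, one_mul] at h
  have e1 : (fun i => ((z i).re : ℂ) * 1 + (z i).im * Complex.I) = z := by
    ext i; simp
  have e2 : (fun i => ((z i).re : ℂ) * (-1) + (z i).im * Complex.I)
      = fun i => (starRingEnd ℂ) ((-z) i) := by
    ext i
    apply Complex.ext <;> simp
  rw [e1, e2, aux_conj, Complex.norm_conj] at h
  exact h

theorem aux_hom {n : ℕ} (g : MvPolynomial (Fin n) ℝ) (M : ℕ) (hM : g.totalDegree < M)
    (t : ℂ) (z : Fin n → ℂ) :
    MvPolynomial.aeval (t • z) g = ∑ j ∈ Finset.range M,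
      t ^ j * MvPolynomial.aeval z (MvPolynomial.homogeneousComponent j g) := by
  have h1 : g = ∑ j ∈ Finset.range M, MvPolynomial.homogeneousComponent j g := by
    conv_lhs => rw [← MvPolynomial.sum_homogeneousComponent g]
    apply Finset.sum_subset
    · intro j; simp only [Finset.mem_range]; omega
    · intro j _ hj
      simp only [Finset.mem_range] at hj
      exact MvPolynomial.homogeneousComponent_eq_zero _ _ (by omega)
  conv_lhs => rw [h1]
  rw [map_sum]
  refine Finset.sum_congr rfl (fun j _ => ?_)
  have hh := MvPolynomial.homogeneousComponent_isHomogeneous j g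
  generalize MvPolynomial.homogeneousComponent j g = p at hh
  rw [MvPolynomial.aeval_def, MvPolynomial.aeval_def, MvPolynomial.eval₂_eq', MvPolynomial.eval₂_eq',
    Finset.mul_sum]
  refine Finset.sum_congr rfl (fun s hs => ?_)
  have hdeg := hh.degree_eq_sum_deg_support hs
  simp only [Pi.smul_apply, smul_eq_mul, mul_pow, Finset.prod_mul_distrib,
    Finset.prod_pow_eq_pow_sum]
  have : ∑ i, s i = j := by
    rw [hdeg]
    exact (Finset.sum_subset (Finset.subset_univ _) (fun i _ hi => by simpa using hi)).symm
  rw [this]; ring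

theorem aux_parity (a : ℕ → ℂ) (r : ℕ) (hr : r < 2) (D : ℕ) :
    ∑ j ∈ Finset.range (2 * D), (a j + (-1) ^ r * ((-1) ^ j * a j))
      = 2 * ∑ i ∈ Finset.range D, a (2 * i + r) := by
  induction D with
  | zero => simp
  | succ D ih =>
    rw [show 2 * (D + 1) = 2 * D + 1 + 1 by ring, Finset.sum_range_succ, Finset.sum_range_succ, ih,
      Finset.sum_range_succ]
    have : ((-1 : ℂ)) ^ (2 * D) = 1 := by rw [pow_mul]; simp
    interval_cases r
    · simp [pow_succ, this]; ring
    · simp [pow_succ, this]; ring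

theorem aux_zero {n : ℕ} (p : MvPolynomial (Fin n) ℝ)
    (h : ∀ y : Fin n → ℂ, MvPolynomial.aeval y p = 0) : p = 0 := by
  apply MvPolynomial.funext
  intro x
  have h1 := h (fun i => algebraMap ℝ ℂ (x i))
  rw [show (fun i => algebraMap ℝ ℂ (x i)) = algebraMap ℝ ℂ ∘ x from rfl,
    MvPolynomial.aeval_algebraMap_apply] at h1
  simpa using h1

/-- Complex linear combinations of homogeneous components. -/
noncomputable def auxComb {n : ℕ} (g : MvPolynomial (Fin n) ℝ) (M : ℕ) (φ : ℕ → ℕ) (b : ℕ → ℂ) :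
    MvPolynomial (Fin n) ℂ :=
  ∑ j ∈ Finset.range M, MvPolynomial.C (b j) *
    MvPolynomial.map (algebraMap ℝ ℂ) (MvPolynomial.homogeneousComponent (φ j) g)

theorem auxComb_eval {n : ℕ} (g : MvPolynomial (Fin n) ℝ) (M : ℕ) (φ : ℕ → ℕ) (b : ℕ → ℂ)
    (z : Fin n → ℂ) : MvPolynomial.aeval z (auxComb g M φ b) = ∑ j ∈ Finset.range M,
      b j * MvPolynomial.aeval z (MvPolynomial.homogeneousComponent (φ j) g) := by
  simp [auxComb, map_sum, MvPolynomial.aeval_def]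

theorem auxComb_deg {n : ℕ} (g : MvPolynomial (Fin n) ℝ) (M : ℕ) (φ : ℕ → ℕ) (b : ℕ → ℂ) (E : ℕ)
    (hE : ∀ j < M, φ j ≤ E) : (auxComb g M φ b).totalDegree ≤ E := by
  apply MvPolynomial.totalDegree_finsetSum_le
  intro j hj
  refine (MvPolynomial.totalDegree_mul _ _).trans ?_
  have h1 := ((MvPolynomial.homogeneousComponent_isHomogeneous (φ j) g).map
    (algebraMap ℝ ℂ)).totalDegree_le
  have h2 := hE j (Finset.mem_range.1 hj)
  simp only [MvPolynomial.totalDegree_C, zero_add]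
  exact h1.trans h2

theorem aux_sector (z : ℂ) (h0 : z ≠ 0) (h : |z.arg| < 1 / 2 * Real.pi / 2) : |z.im| < z.re := by
  have hpos : 0 < ‖z‖ := norm_pos_iff.2 h0
  rw [abs_lt] at h
  have hre : 0 < z.re := by
    have : |z.arg| < Real.pi / 2 := by rw [abs_lt]; constructor <;> linarith [Real.pi_pos]
    rcases Complex.abs_arg_lt_pi_div_two_iff.1 this with h | h
    · exact h
    · exact absurd h h0
  have hc : 0 < Real.cos (2 * z.arg) :=
    Real.cos_pos_of_mem_Ioo ⟨by linarith, by linarith⟩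
  rw [Real.cos_two_mul', Complex.cos_arg h0, Complex.sin_arg, div_pow, div_pow, ← sub_div] at hc
  have h2 : 0 < z.re ^ 2 - z.im ^ 2 := by
    by_contra hn
    push Not at hn
    exact absurd hc (not_lt.2 (div_nonpos_of_nonpos_of_nonneg hn (by positivity)))
  exact abs_lt_of_sq_lt_sq (by linarith) hre.le

theorem aux_sqrt (w : ℂ) (hw : 0 < w.re) : ∃ t : ℂ, t ^ 2 = w ∧ |t.im| < t.re := by
  obtain ⟨t, ht⟩ := IsAlgClosed.exists_pow_nat_eq w (n := 2) (by norm_num)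
  have hsq : t.im ^ 2 < t.re ^ 2 := by
    rw [← ht] at hw
    simp [pow_two] at hw
    nlinarith
  rcases le_total 0 t.re with h | h
  · exact ⟨t, ht, abs_lt_of_sq_lt_sq hsq h⟩
  · exact ⟨-t, by simpa using ht, by
      simpa using abs_lt_of_sq_lt_sq (by simpa using hsq) (show 0 ≤ -t.re by linarith)⟩

theorem aux_open (n : ℕ) : IsOpen {z : Fin n → ℂ | ∀ i, |(z i).im| < (z i).re} := by
  rw [Set.ofPred_forall]
  refine isOpen_iInter_of_finite (fun i => isOpen_lt ?_ ?_)
  · exact (Complex.continuous_im.comp (continuous_apply i)).abs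
  · exact Complex.continuous_re.comp (continuous_apply i)

theorem aux_open' (n : ℕ) : IsOpen {z : Fin n → ℂ | ∀ i, 0 < (z i).re} := by
  rw [Set.ofPred_forall]
  exact isOpen_iInter_of_finite (fun i => isOpen_lt continuous_const
    (Complex.continuous_re.comp (continuous_apply i)))

open Filter Topology in
theorem aux_c_lim : Tendsto (fun N : ℕ => (((1 / ((N : ℝ) + 1) : ℝ)) : ℂ)) atTop (𝓝 0) := by
  have := (Complex.continuous_ofReal.tendsto 0).comp
    (tendsto_one_div_add_atTop_nhds_zero_nat (𝕜 := ℝ))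
  simpa [Function.comp_def] using this

open Filter Topology in
/-- The parity part of a Hurwitz-stable polynomial is Hurwitz-stable or zero. -/
theorem aux_step1 {n : ℕ} (g : MvPolynomial (Fin n) ℝ)
    (hg : ∀ z : Fin n → ℂ, (∀ i, 0 < (z i).re) → MvPolynomial.aeval z g ≠ 0) (r : ℕ)
    (z : Fin n → ℂ) (hz : ∀ i, 0 < (z i).re)
    (h0 : MvPolynomial.aeval z g + (-1) ^ r * MvPolynomial.aeval (-z) g = 0)
    (y : Fin n → ℂ) :
    MvPolynomial.aeval y g + (-1) ^ r * MvPolynomial.aeval (-y) g = 0 := by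
  set c : ℕ → ℝ := fun N => 1 / ((N : ℝ) + 1) with hcdef
  have hE : ∀ N (z : Fin n → ℂ), MvPolynomial.aeval z (auxComb g (g.totalDegree + 1) id
      (fun j => 1 + (1 - (c N : ℂ)) * (-1) ^ r * (-1) ^ j))
      = MvPolynomial.aeval z g + (1 - (c N : ℂ)) * (-1) ^ r * MvPolynomial.aeval (-z) g := by
    intro N z
    have e1 := aux_hom g (g.totalDegree + 1) (Nat.lt_succ_self _) 1 z
    have e2 := aux_hom g (g.totalDegree + 1) (Nat.lt_succ_self _) (-1) z
    rw [one_smul] at e1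
    rw [neg_one_smul] at e2
    rw [auxComb_eval, e1, e2, Finset.mul_sum, ← Finset.sum_add_distrib]
    refine Finset.sum_congr rfl (fun j _ => ?_)
    simp only [id, one_pow]
    ring
  refine aux_hurwitz {z : Fin n → ℂ | ∀ i, 0 < (z i).re} (aux_open' n) (g.totalDegree)
    (fun N => auxComb g (g.totalDegree + 1) id
      (fun j => 1 + (1 - (c N : ℂ)) * (-1) ^ r * (-1) ^ j))
    (fun N => auxComb_deg _ _ _ _ _ (fun j hj => by simp only [id]; omega)) ?_
    (fun y => MvPolynomial.aeval y g + (-1) ^ r * MvPolynomial.aeval (-y) g) ?_ z hz h0 y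
  · intro N z hz hzero
    rw [hE] at hzero
    have hHB := aux_HB g hg z hz
    have hpos : 0 < ‖MvPolynomial.aeval z g‖ := norm_pos_iff.2 (hg z hz)
    have hc0 : 0 < c N := by simp only [hcdef]; positivity
    have hc1 : c N ≤ 1 := by
      simp only [hcdef]
      rw [div_le_one (by positivity)]
      have : (0 : ℝ) ≤ N := Nat.cast_nonneg N
      linarith
    have e : MvPolynomial.aeval z g
        = -(((1 - c N : ℝ) : ℂ) * (-1) ^ r * MvPolynomial.aeval (-z) g) := by
      push_cast
      linear_combination hzero
    have e' := congrArg norm e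
    rw [norm_neg, norm_mul, norm_mul, norm_pow, norm_neg, norm_one, one_pow, mul_one,
      Complex.norm_real, Real.norm_of_nonneg (by linarith)] at e'
    nlinarith [norm_nonneg (MvPolynomial.aeval (-z) g)]
  · intro z
    simp only [hE]
    have h1 : Tendsto (fun N => 1 - (c N : ℂ)) atTop (𝓝 (1 - 0)) :=
      tendsto_const_nhds.sub aux_c_lim
    have h2 := ((h1.mul_const ((-1) ^ r)).mul_const (MvPolynomial.aeval (-z) g)).const_add
      (MvPolynomial.aeval z g)
    simpa using h2

open Filter Topology in
theorem aux_main {n : ℕ} (g : MvPolynomial (Fin n) ℝ)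
    (hg : ∀ z : Fin n → ℂ, (∀ i, 0 < (z i).re) → MvPolynomial.aeval z g ≠ 0) (k : ℕ)
    (z : Fin n → ℂ) (hz : ∀ i, |(z i).im| < (z i).re)
    (h0 : MvPolynomial.aeval z (MvPolynomial.homogeneousComponent k g) = 0) :
    MvPolynomial.homogeneousComponent k g = 0 := by
  obtain ⟨m, r, hr, hk⟩ : ∃ m r, r < 2 ∧ k = 2 * m + r := ⟨k / 2, k % 2, by omega, by omega⟩
  set D := g.totalDegree + k + 1 with hD
  let q : (Fin n → ℂ) → Polynomial ℂ := fun y => ∑ i ∈ Finset.range D,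
    MvPolynomial.aeval y (MvPolynomial.homogeneousComponent (2 * i + r) g) •
      (Polynomial.X ^ i : Polynomial ℂ)
  have hqc : ∀ y, (q y).coeff m
      = MvPolynomial.aeval y (MvPolynomial.homogeneousComponent k g) := by
    intro y
    simp only [q, Polynomial.finsetSum_coeff, Polynomial.coeff_smul, Polynomial.coeff_X_pow,
      smul_eq_mul, mul_ite, mul_one, mul_zero]
    rw [Finset.sum_ite_eq, if_pos (Finset.mem_range.2 (by omega)), hk]
  have hq : ∀ y (t : ℂ), MvPolynomial.aeval (t • y) g + (-1) ^ r * MvPolynomial.aeval (-(t • y)) g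
      = 2 * t ^ r * (q y).eval (t ^ 2) := by
    intro y t
    have e1 := aux_hom g (2 * D) (by omega) t y
    have e2 := aux_hom g (2 * D) (by omega) (-t) y
    rw [neg_smul] at e2
    have e3 := aux_parity (fun j => t ^ j *
      MvPolynomial.aeval y (MvPolynomial.homogeneousComponent j g)) r hr D
    rw [e1, e2, Finset.mul_sum, ← Finset.sum_add_distrib]
    rw [mul_assoc, Polynomial.eval_finsetSum, Finset.mul_sum]
    convert e3 using 1
    · refine Finset.sum_congr rfl (fun j _ => ?_)
      rw [neg_pow t j]; ring
    · congr 1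
      refine Finset.sum_congr rfl (fun j _ => ?_)
      simp only [Polynomial.eval_smul, Polynomial.eval_pow, Polynomial.eval_X, smul_eq_mul]
      ring
  apply aux_zero
  intro y
  by_cases hf : ∃ x : Fin n → ℂ, (∀ i, 0 < (x i).re) ∧
      MvPolynomial.aeval x g + (-1) ^ r * MvPolynomial.aeval (-x) g = 0
  · obtain ⟨x, hx, hx0⟩ := hf
    have hall := aux_step1 g hg r x hx hx0
    have hq0 : Polynomial.X * q y = 0 := by
      apply Polynomial.funext
      intro w
      obtain ⟨t, ht⟩ := IsAlgClosed.exists_pow_nat_eq w (n := 2) (by norm_num)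
      have h1 := hq y t
      rw [hall (t • y), ht] at h1
      by_cases hw : w = 0
      · simp [hw]
      have ht0 : t ≠ 0 := by rintro rfl; exact hw (by simpa using ht.symm)
      have : (q y).eval w = 0 := by
        rcases mul_eq_zero.1 h1.symm with h | h
        · exact absurd h (mul_ne_zero two_ne_zero (pow_ne_zero _ ht0))
        · exact h
      simp [this]
    have : q y = 0 := (mul_eq_zero.1 hq0).resolve_left Polynomial.X_ne_zero
    rw [← hqc, this, Polynomial.coeff_zero]
  · push Not at hf
    have hqne : ∀ x : Fin n → ℂ, (∀ i, |(x i).im| < (x i).re) → ∀ w : ℂ, 0 < w.re →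
        (q x).eval w ≠ 0 := by
      intro x hx w hw hzero
      obtain ⟨t, ht, htr⟩ := aux_sqrt w hw
      refine hf (t • x) (fun i => ?_) (by rw [hq, ht, hzero, mul_zero])
      have h1 := abs_lt.1 (hx i)
      have h2 := abs_lt.1 htr
      simp only [Pi.smul_apply, smul_eq_mul, Complex.mul_re]
      nlinarith [h1.1, h1.2, h2.1, h2.2]
    set c : ℕ → ℝ := fun N => 1 / ((N : ℝ) + 1) with hcdef
    have hE : ∀ N (x : Fin n → ℂ), MvPolynomial.aeval x (auxComb g D (fun i => 2 * i + r)
        (fun i => (((auxT (c N)) ^ m) (Polynomial.X ^ i)).eval (c N : ℂ)))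
        = (((auxT (c N)) ^ m) (q x)).eval (c N : ℂ) := by
      intro N x
      rw [auxComb_eval]
      simp only [q, map_sum, map_smul, Polynomial.eval_finsetSum, Polynomial.eval_smul,
        smul_eq_mul]
      exact Finset.sum_congr rfl (fun j _ => mul_comm _ _)
    have hlimval : ∀ x, (Polynomial.derivative^[m] (q x)).eval 0
        = (m.factorial : ℂ) * MvPolynomial.aeval x (MvPolynomial.homogeneousComponent k g) := by
      intro x
      rw [← Polynomial.coeff_zero_eq_eval_zero, Polynomial.coeff_iterate_derivative, zero_add,
        Nat.descFactorial_self, hqc, nsmul_eq_mul]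
    have hfin := aux_hurwitz {x : Fin n → ℂ | ∀ i, |(x i).im| < (x i).re} (aux_open n) (2 * D + r)
      (fun N => auxComb g D (fun i => 2 * i + r)
        (fun i => (((auxT (c N)) ^ m) (Polynomial.X ^ i)).eval (c N : ℂ)))
      (fun N => auxComb_deg _ _ _ _ _ (fun j hj => by omega))
      (fun N x hx => by
        have hc0 : 0 < c N := by simp only [hcdef]; positivity
        simp only [hE]
        exact auxT_iter (c N) hc0 m (q x) (hqne x hx) _ (by simpa using hc0))
      (fun x => (Polynomial.derivative^[m] (q x)).eval 0)
      (fun x => by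
        simp only [hE]
        exact auxT_lim (fun N => (c N : ℂ)) aux_c_lim m (q x))
      z hz (by rw [hlimval, h0, mul_zero]) y
    rw [hlimval] at hfin
    exact (mul_eq_zero.1 hfin).resolve_left (Nat.cast_ne_zero.2 (Nat.factorial_ne_zero m))

/-- Every homogeneous (degree-`k`) part of a Hurwitz-stable (`Γ₁`-stable) real
polynomial is either identically zero or `Γ_{1/2}`-stable. -/
theorem homogeneousComponent_of_hurwitzStable {n : ℕ} (g : MvPolynomial (Fin n) ℝ)
    (hstable : SectorStable 1 g) (k : ℕ) :
    MvPolynomial.homogeneousComponent k g = 0 ∨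
      SectorStable (1 / 2) (MvPolynomial.homogeneousComponent k g) := by
  by_cases h : MvPolynomial.homogeneousComponent k g = 0
  · exact Or.inl h
  · refine Or.inr (fun z hz h0 => h ?_)
    refine aux_main g (fun x hx => hstable x (fun i => ⟨?_, ?_⟩)) k z
      (fun i => aux_sector (z i) (hz i).1 (hz i).2) h0
    · intro h1
      have := hx i
      simp [h1] at this
    · rw [one_mul]
      exact Complex.abs_arg_lt_pi_div_two_iff.2 (Or.inl (hx i))
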